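/- arXiv:2012.09927 — 7 statements merged into one kernel-verified Lean document; each statement's English description precedes it below -/
import Mathlib

section
/- Let a, b, c ∈ K be pairwise distinct with v(a − c) = v(b − c) ≤ v(a − b). Then there exists λ ∈ K^× such that the 2×2 matrix λ·[[a − c, 0], [a − b, b − c]] has all four entries in O and its determinant is a unit of O. (This matrix represents the Möbius transformation comparing the triple (a, b, c) with the triple (a, b, ∞); the conclusion says these two triples are equivalent under PGL₂(O).) -/
/-!
Scaling by `(b - c)⁻¹` turns the matrix into `[[(a - c)/(b - c), 0], [(a - b)/(b - c), 1]]`.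
Since `v (a - c) = v (b - c)`, the upper left entry is a unit; since `v (b - c) ≤ v (a - b)`, the
lower left entry is integral. The matrix is lower triangular with unit diagonal entries, so its
determinant is a unit.
-/

/-- A normalized (surjective) additive discrete valuation on a field `K`,
with `v 0 = ⊤` and `v (K^×) = ℤ`. Its valuation ring is `{x | 0 ≤ v x}`,
whose units are the elements of valuation `0`. -/
def IsDiscreteAddValuation {K : Type*} [Field K] (v : K → WithTop ℤ) : Prop :=
  v 0 = ⊤ ∧ (∀ x : K, x ≠ 0 → v x ≠ ⊤) ∧ (∀ x y : K, v (x * y) = v x + v y) ∧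
    (∀ x y : K, min (v x) (v y) ≤ v (x + y)) ∧ (∀ n : ℤ, ∃ x : K, v x = (n : WithTop ℤ))

/-- If `(a, b, c)` is an ordered triple (`v(a − c) = v(b − c) ≤ v(a − b)`), then some
scalar multiple of the matrix `[[a − c, 0], [a − b, b − c]]` has all entries in the
valuation ring `O = {x | 0 ≤ v x}` and determinant a unit of `O`; i.e. the triples
`(a, b, c)` and `(a, b, ∞)` are equivalent under `PGL₂(O)`. -/
theorem ordered_triple_equiv_infty {K : Type*} [Field K] (v : K → WithTop ℤ)
    (hv : IsDiscreteAddValuation v) (a b c : K)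
    (hab : a ≠ b) (hac : a ≠ c) (hbc : b ≠ c)
    (h1 : v (a - c) = v (b - c)) (h2 : v (b - c) ≤ v (a - b)) :
    ∃ l : K, l ≠ 0 ∧
      (∀ i j : Fin 2, 0 ≤ v ((l • !![a - c, 0; a - b, b - c]) i j)) ∧
      v (l • !![a - c, 0; a - b, b - c]).det = 0 := by
  obtain ⟨hv0, hvtop, hvmul, -, -⟩ := hv
  have hbc' : b - c ≠ 0 := sub_ne_zero.mpr hbc
  -- `v 1 = 0`, since `v 1 = v 1 + v 1` and `v 1` is finite.
  have hv1 : v 1 = 0 := by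
    have h := hvmul 1 1
    rw [mul_one] at h
    lift v 1 to ℤ using hvtop 1 one_ne_zero with n
    norm_cast at h ⊢
    omega
  have hl : v (b - c)⁻¹ + v (b - c) = 0 := by
    rw [← hvmul, inv_mul_cancel₀ hbc', hv1]
  have hl' : 0 ≤ v (b - c)⁻¹ + v (a - b) := hl ▸ add_le_add_right h2 _
  -- The scalar `(b - c)⁻¹` makes both diagonal entries units.
  refine ⟨(b - c)⁻¹, inv_ne_zero hbc', ?_, ?_⟩
  · intro i j
    fin_cases i <;> fin_cases j <;> simp only [Matrix.smul_apply, smul_eq_mul, hvmul]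
    · simp [h1, hl]
    · simp [hv0]
    · simpa using hl'
    · simp [hl]
  · have hdet : ((b - c)⁻¹ • !![a - c, 0; a - b, b - c]).det
        = ((b - c)⁻¹ * (a - c)) * ((b - c)⁻¹ * (b - c)) := by
      simp [Matrix.det_fin_two]
    rw [hdet, hvmul, hvmul, hvmul, h1, hl, add_zero]
end

section
/- Let a, b, α, β ∈ K with a ≠ b and α ≠ β, and set M = [[a − b, α − a], [0, α − β]]. Then there exists λ ∈ K^× such that λ·M has all entries in O and determinant a unit of O if and only if both v(a − b) = v(α − β) and v(α − a) ≥ v(a − b). (This matrix represents the Möbius transformation comparing the triples (a, b, ∞) and (α, β, ∞); the statement characterizes when these two triples are equivalent under PGL₂(O), showing in particular that the radius μ = v(a − b) is an invariant of the equivalence class.) -/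
/-- The matrix `M = [[a − b, α − a], [0, α − β]]` (comparing the triples `(a, b, ∞)`
and `(α, β, ∞)`) has a scalar multiple with all entries in `O = {x | 0 ≤ v x}` and
determinant a unit of `O` if and only if `v(a − b) = v(α − β)` and
`v(α − a) ≥ v(a − b)`. In particular the radius `μ = v(a − b)` is an invariant of the
`PGL₂(O)`-equivalence class of the triple. -/
theorem equiv_iff_radius_and_congruence {K : Type*} [Field K] (v : K → WithTop ℤ)
    (hv : IsDiscreteAddValuation v) (a b α β : K)
    (hab : a ≠ b) (hαβ : α ≠ β) :
    (∃ l : K, l ≠ 0 ∧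
        (∀ i j : Fin 2, 0 ≤ v ((l • !![a - b, α - a; 0, α - β]) i j)) ∧
        v (l • !![a - b, α - a; 0, α - β]).det = 0) ↔
      (v (a - b) = v (α - β) ∧ v (a - b) ≤ v (α - a)) := by
  obtain ⟨h0, hfin, hmul, -, hsurj⟩ := hv
  obtain ⟨p, hp⟩ := WithTop.ne_top_iff_exists.mp (hfin _ (sub_ne_zero.mpr hab))
  obtain ⟨q, hq⟩ := WithTop.ne_top_iff_exists.mp (hfin _ (sub_ne_zero.mpr hαβ))
  have hdet (l : K) : (l • !![a - b, α - a; 0, α - β]).det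
      = (l * (a - b)) * (l * (α - β)) := by
    simp [Matrix.det_fin_two]
  constructor
  · rintro ⟨l, hl, hentry, hd⟩
    obtain ⟨n, hn⟩ := WithTop.ne_top_iff_exists.mp (hfin l hl)
    have h00 := hentry 0 0
    have h01 := hentry 0 1
    have h11 := hentry 1 1
    simp only [Matrix.smul_apply, Matrix.of_apply, Matrix.cons_val', Matrix.cons_val_zero,
      Matrix.cons_val_one, Matrix.cons_val_fin_one, smul_eq_mul, hmul, ← hn, ← hp, ← hq]
      at h00 h01 h11
    rw [hdet] at hd
    simp only [hmul, ← hn, ← hp, ← hq] at hd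
    norm_cast at h00 h11 hd
    -- Two nonnegative integers with sum zero both vanish, so `v (a - b) = v (α - β) = -v l`.
    have hpn : p = -n := by omega
    have hqn : q = -n := by omega
    refine ⟨by rw [← hp, ← hq, hpn, hqn], ?_⟩
    rw [← hp]
    cases hr : v (α - a) with
    | top => exact le_top
    | coe r =>
      rw [hr] at h01
      norm_cast at h01 ⊢
      omega
  · rintro ⟨heq, hle⟩
    obtain ⟨l, hl⟩ := hsurj (-p)
    have hpq : p = q := by
      rw [← hp, ← hq] at heq
      exact_mod_cast heq
    subst hpq
    have hunit : ((-p : ℤ) : WithTop ℤ) + (p : WithTop ℤ) = 0 := by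
      norm_cast
      omega
    refine ⟨l, ?_, ?_, ?_⟩
    · rintro rfl
      rw [h0] at hl
      exact WithTop.top_ne_coe hl
    · intro i j
      fin_cases i <;> fin_cases j <;>
        simp only [Fin.zero_eta, Fin.mk_one, Matrix.smul_apply, Matrix.of_apply, Matrix.cons_val',
          Matrix.cons_val_zero, Matrix.cons_val_one, Matrix.cons_val_fin_one, smul_eq_mul, hmul,
          hl, ← hp, ← hq, h0]
      · exact hunit.ge
      · rw [← hunit, hp]
        gcongr
      · simp
      · exact hunit.ge
    · rw [hdet]
      simp only [hmul, hl, ← hp, ← hq, hunit, add_zero]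
end

section
/- Let a, b ∈ R be distinct and α, β ∈ R be distinct, and suppose D(a, v(a − b)) ∩ R = D(α, v(α − β)) ∩ R. Then v(a − b) = v(α − β) and v(a − α) ≥ v(a − b). (This is the injectivity of the map Φ from equivalence classes of ordered triples to clusters: two ordered triples defining the same cluster are PGL₂(O)-equivalent.) -/
/-- The disc `D(z, d) = {x ∈ K : v(x − z) ≥ d}`. -/
def disc {K : Type*} [Field K] (v : K → WithTop ℤ) (z : K) (d : WithTop ℤ) : Set K :=
  {x : K | d ≤ v (x - z)}

/-- Since `2 * v (-1) = v 1 = 0` and `ℤ` is torsion-free, `v (-1) = 0`; hence `v` is even. -/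
lemma IsDiscreteAddValuation.map_sub_swap {K : Type*} [Field K] {v : K → WithTop ℤ}
    (hv : IsDiscreteAddValuation v) (x y : K) : v (x - y) = v (y - x) := by
  obtain ⟨-, hfin, hmul, -, -⟩ := hv
  have h1 := hmul 1 1
  have h2 := hmul (-1) (-1)
  have h3 := hmul (-1) (y - x)
  obtain ⟨m, hm⟩ := WithTop.ne_top_iff_exists.mp (hfin 1 one_ne_zero)
  obtain ⟨n, hn⟩ := WithTop.ne_top_iff_exists.mp (hfin (-1) (neg_ne_zero.mpr one_ne_zero))
  rw [mul_one, ← hm] at h1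
  rw [neg_mul_neg, mul_one, ← hm, ← hn] at h2
  norm_cast at h1 h2
  have hn0 : n = 0 := by omega
  rw [← hn, hn0, neg_one_mul, neg_sub] at h3
  simpa using h3

/-- Two points of a disc are at least as close to each other as the depth of the disc. -/
lemma IsDiscreteAddValuation.le_map_sub_of_mem_disc {K : Type*} [Field K] {v : K → WithTop ℤ}
    (hv : IsDiscreteAddValuation v) {x y z : K} {d : WithTop ℤ}
    (hx : x ∈ disc v z d) (hy : y ∈ disc v z d) : d ≤ v (x - y) := by
  have hy' : d ≤ v (z - y) := by
    rw [hv.map_sub_swap]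
    exact hy
  have h := hv.2.2.2.1 (x - z) (z - y)
  rw [sub_add_sub_cancel] at h
  exact (le_min hx hy').trans h

/-- Injectivity of the map `Φ` from equivalence classes of ordered triples to clusters:
if `a ≠ b` and `α ≠ β` in `R` define the same cluster
`D(a, v(a − b)) ∩ R = D(α, v(α − β)) ∩ R`, then `v(a − b) = v(α − β)` and
`v(a − α) ≥ v(a − b)`, i.e. the corresponding ordered triples are
`PGL₂(O)`-equivalent. -/
theorem Phi_injective {K : Type*} [Field K] (v : K → WithTop ℤ)
    (hv : IsDiscreteAddValuation v) (R : Finset K)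
    (a b α β : K) (ha : a ∈ R) (hb : b ∈ R) (hα : α ∈ R) (hβ : β ∈ R)
    (hab : a ≠ b) (hαβ : α ≠ β)
    (heq : disc v a (v (a - b)) ∩ ↑R = disc v α (v (α - β)) ∩ ↑R) :
    v (a - b) = v (α - β) ∧ v (a - b) ≤ v (a - α) := by
  have hself : ∀ z d, z ∈ disc v z d := fun z d => by simp [disc, hv.1]
  have hb' : b ∈ disc v a (v (a - b)) := (hv.map_sub_swap a b).le
  have hβ' : β ∈ disc v α (v (α - β)) := (hv.map_sub_swap α β).le
  have haα : a ∈ disc v α (v (α - β)) := (heq.subset ⟨hself a _, ha⟩).1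
  have hbα : b ∈ disc v α (v (α - β)) := (heq.subset ⟨hb', hb⟩).1
  have hαa : α ∈ disc v a (v (a - b)) := (heq.superset ⟨hself α _, hα⟩).1
  have hβa : β ∈ disc v a (v (a - b)) := (heq.superset ⟨hβ', hβ⟩).1
  exact ⟨le_antisymm (hv.le_map_sub_of_mem_disc hαa hβa) (hv.le_map_sub_of_mem_disc haα hbα),
    hv.le_map_sub_of_mem_disc (hself a _) hαa⟩
end

section
/- Suppose R = s₁ ∪ s₂ where s₁ = D(z₁, d₁) ∩ R and s₂ = D(z₂, d₂) ∩ R are disjoint nonempty clusters with s₁ ≠ R and s₂ ≠ R. Then for every triple (a, b, c) of pairwise distinct elements of R satisfying v(a − c) = v(b − c) ≤ v(a − b), the cluster D(a, v(a − b)) ∩ R is contained in s₁ or in s₂. (Hence when the maximal cluster has precisely two children, it does not lie in the image of the map Φ from ordered triples to clusters.) -/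
namespace IsDiscreteAddValuation

variable {K : Type*} [Field K] {v : K → WithTop ℤ}

lemma map_neg (hv : IsDiscreteAddValuation v) (x : K) : v (-x) = v x := by
  obtain ⟨-, htop, hmul, -, -⟩ := hv
  have h1 : v 1 = v 1 + v 1 := by simpa using hmul 1 1
  have h2 : v 1 = v (-1) + v (-1) := by simpa using hmul (-1) (-1)
  have h3 : v (-x) = v (-1) + v x := by simpa using hmul (-1) x
  obtain ⟨m, hm⟩ := WithTop.ne_top_iff_exists.1 (htop 1 one_ne_zero)
  obtain ⟨n, hn⟩ := WithTop.ne_top_iff_exists.1 (htop (-1) (neg_ne_zero.2 one_ne_zero))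
  rw [← hm] at h1
  rw [← hm, ← hn] at h2
  norm_cast at h1 h2
  have hn0 : n = 0 := by omega
  rw [h3, ← hn, hn0]
  simp

lemma map_sub_comm (hv : IsDiscreteAddValuation v) (x y : K) : v (x - y) = v (y - x) := by
  rw [← hv.map_neg, neg_sub]

lemma le_sub_trans (hv : IsDiscreteAddValuation v) {d : WithTop ℤ} {x y z : K}
    (hxy : d ≤ v (x - y)) (hyz : d ≤ v (y - z)) : d ≤ v (x - z) := by
  have h := hv.2.2.2.1 (x - y) (y - z)
  rw [sub_add_sub_cancel] at h
  exact (le_min hxy hyz).trans h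

lemma le_sub_of_mem_disc (hv : IsDiscreteAddValuation v) {d : WithTop ℤ} {x y z : K}
    (hx : x ∈ disc v z d) (hy : y ∈ disc v z d) : d ≤ v (x - y) :=
  hv.le_sub_trans hx (by rw [hv.map_sub_comm]; exact hy)

/-- A disc is contained in every disc of no larger parameter that it meets; here the common point
is `a` or `b`. -/
lemma disc_subset_disc_of_mem (hv : IsDiscreteAddValuation v) {d : WithTop ℤ} {a b z : K}
    (hd : d ≤ v (a - b)) (h : a ∈ disc v z d ∨ b ∈ disc v z d) :
    disc v a (v (a - b)) ⊆ disc v z d := by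
  have ha : a ∈ disc v z d := h.elim id fun hb => hv.le_sub_trans hd hb
  exact fun x hx => hv.le_sub_trans (hd.trans hx) ha

end IsDiscreteAddValuation

/-- When the maximal cluster `R` is the disjoint union of two proper subclusters
`s₁, s₂` (its two children), it does not lie in the image of `Φ`: the cluster
`D(a, v(a − b)) ∩ R` attached to any ordered triple `(a, b, c)` of elements of `R`
is contained in `s₁` or in `s₂`. -/
theorem smax_not_in_image_of_Phi {K : Type*} [Field K]
    (v : K → WithTop ℤ) (hv : IsDiscreteAddValuation v) (R : Finset K)
    (z₁ z₂ : K) (d₁ d₂ : ℤ) (s₁ s₂ : Set K)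
    (hs₁ : s₁ = disc v z₁ (d₁ : WithTop ℤ) ∩ ↑R)
    (hs₂ : s₂ = disc v z₂ (d₂ : WithTop ℤ) ∩ ↑R)
    (hne₁ : s₁.Nonempty) (hne₂ : s₂.Nonempty)
    (hdisj : s₁ ∩ s₂ = ∅) (hcover : (↑R : Set K) = s₁ ∪ s₂)
    (hs₁R : s₁ ≠ ↑R) (hs₂R : s₂ ≠ ↑R) :
    ∀ a b c : K, a ∈ R → b ∈ R → c ∈ R → a ≠ b → a ≠ c → b ≠ c →
      v (a - c) = v (b - c) → v (b - c) ≤ v (a - b) →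
      (disc v a (v (a - b)) ∩ ↑R ⊆ s₁ ∨ disc v a (v (a - b)) ∩ ↑R ⊆ s₂) := by
  intro a b c ha hb hc _ _ _ hac hle
  have hmem : ∀ x ∈ R, x ∈ disc v z₁ d₁ ∨ x ∈ disc v z₂ d₂ := by
    intro x hx
    have h : x ∈ s₁ ∪ s₂ := hcover ▸ Finset.mem_coe.2 hx
    rw [hs₁, hs₂] at h
    exact h.imp And.left And.left
  -- Two of the three points in one disc `D(z, d)` force `D(a, v (a - b)) ⊆ D(z, d)`.
  have hab : ∀ {z : K} {d : WithTop ℤ}, a ∈ disc v z d → b ∈ disc v z d →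
      disc v a (v (a - b)) ⊆ disc v z d := fun h h' =>
    hv.disc_subset_disc_of_mem (hv.le_sub_of_mem_disc h h') (Or.inl h)
  have hac' : ∀ {z : K} {d : WithTop ℤ}, a ∈ disc v z d → c ∈ disc v z d →
      disc v a (v (a - b)) ⊆ disc v z d := fun h h' =>
    hv.disc_subset_disc_of_mem ((hv.le_sub_of_mem_disc h h').trans (hac.trans_le hle)) (Or.inl h)
  have hbc : ∀ {z : K} {d : WithTop ℤ}, b ∈ disc v z d → c ∈ disc v z d →
      disc v a (v (a - b)) ⊆ disc v z d := fun h h' =>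
    hv.disc_subset_disc_of_mem ((hv.le_sub_of_mem_disc h h').trans hle) (Or.inr h)
  have key : disc v a (v (a - b)) ⊆ disc v z₁ d₁ ∨ disc v a (v (a - b)) ⊆ disc v z₂ d₂ := by
    rcases hmem a ha with h | h <;> rcases hmem b hb with h' | h' <;>
      rcases hmem c hc with h'' | h''
    · exact Or.inl (hab h h')
    · exact Or.inl (hab h h')
    · exact Or.inl (hac' h h'')
    · exact Or.inr (hbc h' h'')
    · exact Or.inl (hbc h' h'')
    · exact Or.inr (hac' h h'')
    · exact Or.inr (hab h h')
    · exact Or.inr (hab h h')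
  rw [hs₁, hs₂]
  exact key.imp (Set.inter_subset_inter_left _) (Set.inter_subset_inter_left _)
end

section
/- Let a, b, c, x₁, x₂ ∈ K with a ≠ b, set μ = v(a − b), and suppose v(a − c) = v(b − c) < μ, v(x₁ − a) ≥ μ, v(x₂ − a) ≥ μ, and v(x₁ − x₂) > μ. Then v(φ(x₁) − φ(x₂)) > 0, i.e. the coordinate function φ takes the same value modulo the maximal ideal at x₁ and x₂. (This is the case of two roots lying in a common proper subcluster of the cluster attached to the ordered triple (a, b, c).) -/
/-- The coordinate function `φ(x) = ((b − c)/(b − a))·((x − a)/(x − c))` of the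
triple `(a, b, c)`. -/
def coordFn {K : Type*} [Field K] (a b c x : K) : K :=
  ((b - c) / (b - a)) * ((x - a) / (x - c))

/-- If `x₁, x₂` lie in a common proper subcluster of the cluster attached to the
ordered triple `(a, b, c)` (i.e. `v(xᵢ − a) ≥ μ = v(a − b)` and `v(x₁ − x₂) > μ`,
with `v(a − c) = v(b − c) < μ`), then the coordinate function takes the same value
modulo the maximal ideal at `x₁` and `x₂`: `v(φ(x₁) − φ(x₂)) > 0`. -/
theorem coordFn_same_value_of_common_subcluster {K : Type*} [Field K]
    (v : K → WithTop ℤ) (hv : IsDiscreteAddValuation v)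
    (a b c x₁ x₂ : K) (hab : a ≠ b)
    (h1 : v (a - c) = v (b - c)) (h2 : v (b - c) < v (a - b))
    (h3 : v (a - b) ≤ v (x₁ - a)) (h4 : v (a - b) ≤ v (x₂ - a))
    (h5 : v (a - b) < v (x₁ - x₂)) :
    0 < v (coordFn a b c x₁ - coordFn a b c x₂) := by
  obtain ⟨hv0, hvtop, hvmul, hvadd, -⟩ := hv
  have hv1 : v 1 = 0 := by
    have h := hvmul 1 1
    have ht := hvtop 1 one_ne_zero
    rw [mul_one] at h
    lift v 1 to ℤ using ht with n
    norm_cast at h ⊢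
    omega
  let w : AddValuation K (WithTop ℤ) := AddValuation.of v hv0 hv1 hvadd hvmul
  have hvsub : ∀ x y : K, v (x - y) = v (y - x) := fun x y => w.map_sub_swap x y
  -- Each `xᵢ` is closer to `a` than `c` is, so `v (xᵢ - c) = v (a - c)`.
  have key : ∀ x : K, v (a - b) ≤ v (x - a) → v (x - c) = v (b - c) := by
    intro x hx
    have h := w.map_add_eq_of_lt_left (x := a - c) (y := x - a)
      (show v (a - c) < v (x - a) from h1 ▸ h2.trans_le hx)
    rw [← h1, show x - c = a - c + (x - a) by ring]
    exact h
  have e1 := key x₁ h3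
  have e2 := key x₂ h4
  have hbc : v (b - c) ≠ ⊤ := h2.ne_top
  have hne : ∀ x : K, v (x - c) = v (b - c) → x - c ≠ 0 := by
    intro x hx h0
    rw [h0, hv0] at hx
    exact hbc hx.symm
  have hx₁ := hne x₁ e1
  have hx₂ := hne x₂ e2
  have hba : b - a ≠ 0 := sub_ne_zero.mpr hab.symm
  have hD : (coordFn a b c x₁ - coordFn a b c x₂) * ((b - a) * ((x₁ - c) * (x₂ - c))) =
      (b - c) * ((a - c) * (x₁ - x₂)) := by
    unfold coordFn
    field_simp
    ring
  have hV := congrArg v hD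
  simp only [hvmul, e1, e2, h1] at hV
  rw [hvsub b a] at hV
  have habt : v (a - b) ≠ ⊤ := h5.ne_top
  generalize v (coordFn a b c x₁ - coordFn a b c x₂) = d at hV ⊢
  generalize v (x₁ - x₂) = t at hV h5
  lift v (b - c) to ℤ using hbc with β
  lift v (a - b) to ℤ using habt with μ
  induction d with
  | top => exact WithTop.coe_lt_top 0
  | coe d =>
    induction t with
    | top => simp [← WithTop.coe_add] at hV
    | coe t =>
      norm_cast at hV h5 ⊢
      omega
end

section
/- Let a, b, c, x₁, x₂ ∈ K with a ≠ b, set μ = v(a − b), and suppose v(a − c) = v(b − c) < μ, v(x₁ − a) ≥ μ, v(x₂ − a) ≥ μ, and v(x₁ − x₂) = μ. Then v(φ(x₁) − φ(x₂)) = 0, i.e. the coordinate function φ takes distinct values modulo the maximal ideal at x₁ and x₂. (This is the case of two roots of the cluster attached to (a, b, c) that do not lie in a common maximal subcluster.) -/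
/-- `v 1` is idempotent for addition and finite, hence zero; the remaining axioms of an
`AddValuation` are part of the definition. -/
theorem IsDiscreteAddValuation.exists_addValuation {K : Type*} [Field K] {v : K → WithTop ℤ}
    (hv : IsDiscreteAddValuation v) : ∃ w : AddValuation K (WithTop ℤ), ∀ x, w x = v x := by
  obtain ⟨h0, hne, hmul, hadd, -⟩ := hv
  have hone : v 1 = 0 := by
    have h := hmul 1 1
    have hfin := hne 1 one_ne_zero
    rw [mul_one] at h
    lift v 1 to ℤ using hfin with n
    norm_cast at h ⊢
    omega
  exact ⟨AddValuation.of v h0 hone hadd hmul, fun _ => rfl⟩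

/-- If `x₁, x₂` lie in the cluster attached to the ordered triple `(a, b, c)` but not
in a common maximal subcluster (i.e. `v(xᵢ − a) ≥ μ = v(a − b)` and `v(x₁ − x₂) = μ`,
with `v(a − c) = v(b − c) < μ`), then the coordinate function takes distinct values
modulo the maximal ideal at `x₁` and `x₂`: `v(φ(x₁) − φ(x₂)) = 0`. -/
theorem coordFn_distinct_values_of_distinct_subclusters {K : Type*} [Field K]
    (v : K → WithTop ℤ) (hv : IsDiscreteAddValuation v)
    (a b c x₁ x₂ : K) (hab : a ≠ b)
    (h1 : v (a - c) = v (b - c)) (h2 : v (b - c) < v (a - b))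
    (h3 : v (a - b) ≤ v (x₁ - a)) (h4 : v (a - b) ≤ v (x₂ - a))
    (h5 : v (x₁ - x₂) = v (a - b)) :
    v (coordFn a b c x₁ - coordFn a b c x₂) = 0 := by
  obtain ⟨w, hw⟩ := hv.exists_addValuation
  have hw' : v = w := funext fun x => (hw x).symm
  subst hw'
  -- Every point `x` of the cluster is at the same distance from `c` as `b`.
  have key : ∀ x, w (a - b) ≤ w (x - a) → w (x - c) = w (b - c) := by
    intro x hx
    have hlt : w (a - c) < w (x - a) := h1 ▸ h2.trans_le hx
    rw [← h1, ← sub_add_sub_cancel x a c]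
    exact w.map_add_eq_of_lt_right hlt
  have k1 := key x₁ h3
  have k2 := key x₂ h4
  have hbc : w (b - c) ≠ ⊤ := h2.ne_top
  have hba : b - a ≠ 0 := sub_ne_zero.mpr hab.symm
  have hvab : w (a - b) ≠ ⊤ := (AddValuation.ne_top_iff w).mpr (sub_ne_zero.mpr hab)
  have n1 : x₁ - c ≠ 0 := (AddValuation.ne_top_iff w).mp (k1 ▸ hbc)
  have n2 : x₂ - c ≠ 0 := (AddValuation.ne_top_iff w).mp (k2 ▸ hbc)
  have hid : (coordFn a b c x₁ - coordFn a b c x₂) * ((b - a) * (x₁ - c) * (x₂ - c))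
      = (b - c) * (a - c) * (x₁ - x₂) := by
    unfold coordFn
    field_simp
    ring
  have hval := congrArg w hid
  simp only [AddValuation.map_mul] at hval
  rw [k1, k2, h1, h5, w.map_sub_swap b a] at hval
  have hd : w (coordFn a b c x₁ - coordFn a b c x₂) ≠ ⊤ := by
    intro h
    rw [h, top_add] at hval
    exact WithTop.add_ne_top.mpr ⟨WithTop.add_ne_top.mpr ⟨hbc, hbc⟩, hvab⟩ hval.symm
  generalize w (coordFn a b c x₁ - coordFn a b c x₂) = d at *
  generalize w (b - c) = p at *
  generalize w (a - b) = q at *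
  lift d to ℤ using hd
  lift p to ℤ using hbc
  lift q to ℤ using hvab
  norm_cast at hval ⊢
  omega
end

section
/- Let k be a field and n a positive integer not divisible by the characteristic of k. Let N ≥ 1, let α₁, …, α_N ∈ k be pairwise distinct, let a₁, …, a_N be positive integers, and set d = gcd(n, a₁, …, a_N). Let γ ∈ k with γ ≠ 0 and let ζ ∈ k be a primitive d-th root of unity. Then in the polynomial ring k(X)[Y] over the rational function field k(X) one has the factorization Y^n − γ^d·∏_{i=1}^N (X − α_i)^{a_i} = ∏_{ℓ=0}^{d−1} ( Y^{n/d} − ζ^ℓ·γ·∏_{i=1}^N (X − α_i)^{a_i/d} ), and each factor Y^{n/d} − ζ^ℓ·γ·∏_{i=1}^N (X − α_i)^{a_i/d} is irreducible in k(X)[Y]. In particular, Y^n − γ^d·∏_{i=1}^N (X − α_i)^{a_i} has exactly d distinct monic irreducible factors, i.e. the plane curve y^n = c·∏(x − α_i)^{a_i} with c = γ^d has exactly d irreducible components over k. -/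
/-!
The factorization is `T ^ d - c ^ d = ∏ (T - ζ ^ ℓ * c)` at `T = Y ^ (n / d)`, with `c` the element
`γ * ∏ (X - α i) ^ (a i / d)` of `k(X)`. The factors are distinct because `ζ` has order exactly `d`.

For the irreducibility of `Y ^ m - A`, let `g` be an irreducible factor, of degree `e`. Taking the
norm of a root of `g` down to `k(X)` exhibits `A ^ e` as an `m`-th power in `k(X)`
(`exists_pow_eq_of_dvd_X_pow_sub_C`). When `A = c * ∏ (X - α i) ^ b i`, comparing orders of vanishing
at each `α i` gives `m ∣ e * b i` (`dvd_mul_of_ratFunc_pow_eq`). For `m = n / d`, `b i = a i / d` and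
`d = gcd (n, a i)` this forces `m ∣ e`, so `g` has full degree.
-/

open Polynomial

/-- The factor `Y^{n/d} − C·∏_{i} (X − α_i)^{a_i/d}` in `k(X)[Y]`, where `C ∈ k(X)`. -/
noncomputable def superellipticFactor {k : Type*} [Field k] {N : ℕ}
    (α : Fin N → k) (a : Fin N → ℕ) (n d : ℕ) (c : k) : Polynomial (RatFunc k) :=
  X ^ (n / d) - C (RatFunc.C c * ∏ i, (RatFunc.X - RatFunc.C (α i)) ^ (a i / d))

/-- The norm of a root of `g` has `m`-th power equal to the norm of `A`, which is
`A ^ g.natDegree`. -/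
lemma exists_pow_eq_of_dvd_X_pow_sub_C {K : Type*} [Field K] {m : ℕ} {A : K} {g : K[X]}
    (hg : g ≠ 0) (hdvd : g ∣ X ^ m - C A) : ∃ b : K, b ^ m = A ^ g.natDegree := by
  refine ⟨Algebra.norm K (AdjoinRoot.root g), ?_⟩
  have h := eval₂_eq_zero_of_dvd_of_eval₂_eq_zero _ _ hdvd (AdjoinRoot.eval₂_root g)
  rw [eval₂_sub, eval₂_pow, eval₂_C, eval₂_X, sub_eq_zero] at h
  rw [← map_pow, h, ← AdjoinRoot.algebraMap_eq, Algebra.norm_algebraMap,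
    (AdjoinRoot.powerBasis hg).finrank, AdjoinRoot.powerBasis_dim hg]

lemma irreducible_X_pow_sub_C_of_forall_dvd {K : Type*} [Field K] {m : ℕ} (hm : 0 < m) {A : K}
    (h : ∀ (e : ℕ) (b : K), b ^ m = A ^ e → m ∣ e) : Irreducible (X ^ m - C A) := by
  have hunit : ¬ IsUnit (X ^ m - C A) := by
    rw [Polynomial.isUnit_iff_degree_eq_zero, degree_X_pow_sub_C hm, Nat.cast_eq_zero]
    exact hm.ne'
  have h0 := X_pow_sub_C_ne_zero hm A
  obtain ⟨g, hg, hdvd⟩ := WfDvdMonoid.exists_irreducible_factor hunit h0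
  obtain ⟨b, hb⟩ := exists_pow_eq_of_dvd_X_pow_sub_C hg.ne_zero hdvd
  have hle : m ≤ g.natDegree := Nat.le_of_dvd hg.natDegree_pos (h _ b hb)
  exact (associated_of_dvd_of_natDegree_le hdvd h0
    (natDegree_X_pow_sub_C.trans_le hle)).irreducible hg

lemma rootMultiplicity_C_mul_prod {k : Type*} [Field k] {N : ℕ} {α : Fin N → k}
    (hα : Function.Injective α) (b : Fin N → ℕ) {c : k} (hc : c ≠ 0) (i : Fin N) :
    rootMultiplicity (α i) (C c * ∏ j, (X - C (α j)) ^ b j) = b i := by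
  classical
  rw [← Finset.mul_prod_erase _ _ (Finset.mem_univ i), mul_left_comm, mul_comm]
  have hrest : ¬ (C c * ∏ j ∈ Finset.univ.erase i, (X - C (α j)) ^ b j).IsRoot (α i) := by
    simp only [IsRoot, eval_mul, eval_C, eval_prod, eval_pow, eval_sub, eval_X]
    refine mul_ne_zero hc (Finset.prod_ne_zero_iff.mpr fun j hj => pow_ne_zero _ ?_)
    exact sub_ne_zero.mpr fun hij => (Finset.ne_of_mem_erase hj) (hα hij).symm
  rw [rootMultiplicity_mul_X_sub_C_pow (fun h => hrest (by simp [h])),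
    rootMultiplicity_eq_zero hrest, zero_add]

/-- If a power of `c * ∏ (X - α j) ^ b j` is an `m`-th power in `k(X)`, its order of vanishing at
each `α i` is divisible by `m`. -/
lemma dvd_mul_of_ratFunc_pow_eq {k : Type*} [Field k] {N : ℕ} {α : Fin N → k}
    (hα : Function.Injective α) (b : Fin N → ℕ) {c : k} (hc : c ≠ 0) {m e : ℕ} {B : RatFunc k}
    (hB : B ^ m = (RatFunc.C c * ∏ j, (RatFunc.X - RatFunc.C (α j)) ^ b j) ^ e) (i : Fin N) :
    m ∣ e * b i := by
  set P : k[X] := C c * ∏ j, (X - C (α j)) ^ b j with hP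
  have hPmap : RatFunc.C c * ∏ j, (RatFunc.X - RatFunc.C (α j)) ^ b j
      = algebraMap k[X] (RatFunc k) P := by
    simp [hP, map_prod]
  have hP0 : P ≠ 0 := mul_ne_zero (C_ne_zero.mpr hc)
    (Finset.prod_ne_zero_iff.mpr fun j _ => pow_ne_zero _ (X_sub_C_ne_zero _))
  have hq : B.denom ≠ 0 := RatFunc.denom_ne_zero B
  have hpoly : B.num ^ m = P ^ e * B.denom ^ m := by
    apply RatFunc.algebraMap_injective k
    rw [hPmap, ← RatFunc.num_div_denom B, div_pow, div_eq_iff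
      (pow_ne_zero _ (RatFunc.algebraMap_ne_zero hq))] at hB
    simpa only [map_mul, map_pow] using hB
  have hpow (p : k[X]) (r : ℕ) :
      rootMultiplicity (α i) (p ^ r) = r * rootMultiplicity (α i) p := by
    classical
    rw [← count_roots, ← count_roots, roots_pow, Multiset.count_nsmul]
  have hmult := congrArg (rootMultiplicity (α i)) hpoly
  rw [rootMultiplicity_mul (mul_ne_zero (pow_ne_zero _ hP0) (pow_ne_zero _ hq)),
    hpow, hpow, hpow, rootMultiplicity_C_mul_prod hα b hc] at hmult
  exact (Nat.dvd_add_left (dvd_mul_right m _)).mp (hmult ▸ dvd_mul_right m _)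

lemma div_gcd_dvd_of_forall_dvd {N n d e : ℕ} (hn : 0 < n) {a : Fin N → ℕ}
    (hd : d = Nat.gcd n (Finset.univ.gcd a)) (h : ∀ i, n / d ∣ e * (a i / d)) : n / d ∣ e := by
  have hdn : d ∣ n := hd ▸ Nat.gcd_dvd_left _ _
  have hda : ∀ i, d ∣ a i := fun i =>
    (hd ▸ Nat.gcd_dvd_right _ _ : d ∣ Finset.univ.gcd a).trans (Finset.gcd_dvd (Finset.mem_univ i))
  have hd0 : 0 < d := Nat.pos_of_dvd_of_pos hdn hn
  have h1 : ∀ i, n ∣ e * a i := fun i => by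
    have := Nat.mul_dvd_mul_right (h i) d
    rwa [Nat.div_mul_cancel hdn, mul_assoc, Nat.div_mul_cancel (hda i)] at this
  have h2 : n ∣ e * Finset.univ.gcd a := by
    have := Finset.dvd_gcd (s := Finset.univ) (f := fun i => e * a i) fun i _ => h1 i
    rwa [Finset.gcd_mul_left, normalize_eq] at this
  have h3 : n ∣ e * d := by
    rw [hd, ← Nat.gcd_mul_left]
    exact Nat.dvd_gcd (dvd_mul_left n e) h2
  exact (Nat.div_dvd_iff_dvd_mul hdn hd0).mpr (by rwa [mul_comm])

/-- Let `k` be a field, `n ≥ 1` not divisible by `char k`, `α₁, …, α_N ∈ k` pairwise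
distinct, `a₁, …, a_N ≥ 1`, `d = gcd(n, a₁, …, a_N)`, `γ ∈ k` nonzero and `ζ ∈ k` a
primitive `d`-th root of unity. Then in `k(X)[Y]`:
`Y^n − γ^d·∏ (X − α_i)^{a_i} = ∏_{ℓ=0}^{d−1} (Y^{n/d} − ζ^ℓ·γ·∏ (X − α_i)^{a_i/d})`,
each factor is irreducible, and the factors are pairwise distinct; so the curve
`y^n = c·∏(x − α_i)^{a_i}` with `c = γ^d` has exactly `d` irreducible components. -/
theorem superelliptic_components {k : Type*} [Field k]
    (n : ℕ) (hn : 0 < n) (hchar : (n : k) ≠ 0)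
    (N : ℕ) (hN : 1 ≤ N) (α : Fin N → k) (hα : Function.Injective α)
    (a : Fin N → ℕ) (ha : ∀ i, 0 < a i)
    (d : ℕ) (hd : d = Nat.gcd n (Finset.univ.gcd a))
    (γ : k) (hγ : γ ≠ 0) (ζ : k) (hζ : IsPrimitiveRoot ζ d) :
    ((X ^ n - C (RatFunc.C (γ ^ d) * ∏ i, (RatFunc.X - RatFunc.C (α i)) ^ (a i))
        : Polynomial (RatFunc k))
      = ∏ ℓ ∈ Finset.range d, superellipticFactor α a n d (ζ ^ ℓ * γ)) ∧
    (∀ ℓ ∈ Finset.range d, Irreducible (superellipticFactor α a n d (ζ ^ ℓ * γ))) ∧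
    (∀ ℓ₁ ∈ Finset.range d, ∀ ℓ₂ ∈ Finset.range d,
      superellipticFactor α a n d (ζ ^ ℓ₁ * γ) = superellipticFactor α a n d (ζ ^ ℓ₂ * γ) →
        ℓ₁ = ℓ₂) := by
  have hdn : d ∣ n := hd ▸ Nat.gcd_dvd_left _ _
  have hda : ∀ i, d ∣ a i := fun i =>
    (hd ▸ Nat.gcd_dvd_right _ _ : d ∣ Finset.univ.gcd a).trans (Finset.gcd_dvd (Finset.mem_univ i))
  have hd0 : 0 < d := Nat.pos_of_dvd_of_pos hdn hn
  have hζ0 : ζ ≠ 0 := hζ.ne_zero hd0.ne'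
  refine ⟨?_, ?_, ?_⟩
  · have hroot : IsPrimitiveRoot (RatFunc.C ζ) d := hζ.map_of_injective RatFunc.C_injective
    have hpow : (RatFunc.C γ * ∏ i, (RatFunc.X - RatFunc.C (α i)) ^ (a i / d)) ^ d
        = RatFunc.C (γ ^ d) * ∏ i, (RatFunc.X - RatFunc.C (α i)) ^ a i := by
      rw [mul_pow, ← map_pow, ← Finset.prod_pow]
      congr 1
      exact Finset.prod_congr rfl fun i _ => by rw [← pow_mul, Nat.div_mul_cancel (hda i)]
    -- Substitute `Y ^ (n / d)` for the variable in `T ^ d - c ^ d = ∏ (T - ζ ^ ℓ * c)`.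
    have hcomp := congrArg (fun p => p.comp (X ^ (n / d))) (X_pow_sub_C_eq_prod hroot hd0 hpow)
    simp only [sub_comp, pow_comp, X_comp, C_comp, prod_comp, ← pow_mul,
      Nat.div_mul_cancel hdn] at hcomp
    rw [hcomp]
    refine Finset.prod_congr rfl fun ℓ _ => ?_
    rw [superellipticFactor, map_mul RatFunc.C, map_pow RatFunc.C, mul_assoc]
  · intro ℓ _
    refine irreducible_X_pow_sub_C_of_forall_dvd
      (Nat.div_pos (Nat.le_of_dvd hn hdn) hd0) fun e B hB => ?_
    exact div_gcd_dvd_of_forall_dvd hn hd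
      (dvd_mul_of_ratFunc_pow_eq hα _ (mul_ne_zero (pow_ne_zero _ hζ0) hγ) hB)
  · intro ℓ₁ h₁ ℓ₂ h₂ h
    have hprod : ∏ i, (RatFunc.X - RatFunc.C (α i)) ^ (a i / d) ≠ 0 :=
      Finset.prod_ne_zero_iff.mpr fun i _ => pow_ne_zero _ <| by
        rw [← RatFunc.algebraMap_X, ← RatFunc.algebraMap_C, ← map_sub]
        exact RatFunc.algebraMap_ne_zero (X_sub_C_ne_zero _)
    have hC := mul_right_cancel₀ hprod (C_injective (sub_right_injective h))
    exact hζ.pow_inj (Finset.mem_range.mp h₁) (Finset.mem_range.mp h₂)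
      (mul_right_cancel₀ hγ (RatFunc.C_injective hC))
end
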